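/- arXiv:2407.14647 — 9 statements merged into one kernel-verified Lean document; each statement's English description precedes it below -/
import Mathlib

section
/- Let I be a finite type and ξ a square matrix of type (I,I) with entries in a commutative ring R. Then det ξ = ∑_{σ ∈ Perm(I)} (-1)^{|I| + c(σ)} · ∏_{i ∈ I} ξ(i, σ(i)), where c(σ) denotes the number of orbits of σ on I (cycles of σ, counting fixed points as cycles of length one). -/
attribute [local instance] Classical.propDecidable

/-- The number of orbits of a permutation `σ` on a finite type `I`, i.e. the number of
cycles in the cycle decomposition of `σ`, counting fixed points as cycles of length one. -/
noncomputable def orbitCount {I : Type*} [Fintype I] (σ : Equiv.Perm I) : ℕ :=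
  Multiset.card σ.cycleType + (Fintype.card I - σ.support.card)

theorem orbitCount_eq_card_partition_parts {I : Type*} [Fintype I] (σ : Equiv.Perm I) :
    orbitCount σ = Multiset.card σ.partition.parts := by
  rw [Equiv.Perm.parts_partition, Multiset.card_add, Multiset.card_replicate, orbitCount]

theorem sign_eq_neg_one_pow_card_add_card_partition_parts {I : Type*} [Fintype I] [DecidableEq I]
    (σ : Equiv.Perm I) :
    Equiv.Perm.sign σ = (-1) ^ (Fintype.card I + Multiset.card σ.partition.parts) := by
  -- Each fixed point counts once as a point and once as a part, so it does not affect the parity.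
  have exponent_eq : Fintype.card I + Multiset.card σ.partition.parts =
      σ.cycleType.sum + Multiset.card σ.cycleType +
        2 * (Fintype.card I - σ.support.card) := by
    have support_le : σ.support.card ≤ Fintype.card I := σ.support.card_le_univ
    rw [Equiv.Perm.parts_partition, Multiset.card_add, Multiset.card_replicate,
      Equiv.Perm.sum_cycleType]
    lia
  rw [exponent_eq, pow_add, Even.neg_one_pow (even_two_mul _), mul_one,
    Equiv.Perm.sign_of_cycleType]

theorem sign_eq_neg_one_pow_card_add_orbitCount {I : Type*} [Fintype I] (σ : Equiv.Perm I) :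
    Equiv.Perm.sign σ = (-1) ^ (Fintype.card I + orbitCount σ) := by
  rw [orbitCount_eq_card_partition_parts, sign_eq_neg_one_pow_card_add_card_partition_parts]

theorem stmt0 {I R : Type*} [Fintype I] [CommRing R] (ξ : Matrix I I R) :
    ξ.det = ∑ σ : Equiv.Perm I,
      (-1 : R) ^ (Fintype.card I + orbitCount σ) * ∏ i : I, ξ i (σ i) := by
  calc
    ξ.det = ξ.transpose.det := ξ.det_transpose.symm
    _ = ∑ σ : Equiv.Perm I, ((Equiv.Perm.sign σ : ℤ) : R) * ∏ i : I, ξ i (σ i) :=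
      Matrix.det_apply' ξ.transpose
    _ = ∑ σ : Equiv.Perm I,
        (-1 : R) ^ (Fintype.card I + orbitCount σ) * ∏ i : I, ξ i (σ i) := by
      simp [sign_eq_neg_one_pow_card_add_orbitCount]
end

section
/- Let I be a finite type and ξ an invertible square matrix of type (I,I) with entries in a field K. Then for all i, j ∈ I, the product of ξ⁻¹(i,j) with ∑_{σ ∈ Perm(I)} (-1)^{c(σ)} ∏_{v ∈ I} ξ(v, σ(v)) equals ∑_{τ ∈ Perm(I), τ(j) = i} (-1)^{c(τ)} ∏_{v ∈ I, v ≠ j} ξ(v, τ(v)); that is, ξ⁻¹(i,j) is the quotient of the signed weighted sum over connections of i to j by the signed weighted sum over linear subdigraphs of D(ξ). -/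
attribute [local instance] Classical.propDecidable

/-! A permutation with `c` orbits on `I` has sign `(-1) ^ (|I| - c)`, so the signed weighted sum
over all permutations is `(-1) ^ |I| * det ξ`. The adjugate entry `(i, j)` is the determinant of `ξ`
with its row `j` replaced by the indicator of `i`; the Leibniz expansion of that determinant retains
exactly the permutations sending `j` to `i`, and drops the weight at `j` from their products. Up
to the common factor `(-1) ^ |I|`, the claim is therefore `ξ⁻¹ i j * det ξ = adjugate ξ i j`. -/

section

variable {I : Type*} [Fintype I]

theorem orbitCount_add_card_support (σ : Equiv.Perm I) :
    orbitCount σ + σ.support.card = Multiset.card σ.cycleType + Fintype.card I := by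
  rw [orbitCount, add_assoc, Nat.sub_add_cancel (Finset.card_le_univ _)]

theorem neg_one_pow_orbitCount (σ : Equiv.Perm I) :
    (-1 : ℤˣ) ^ orbitCount σ = (-1) ^ Fintype.card I * Equiv.Perm.sign σ := by
  have hparity : Fintype.card I + (σ.support.card + Multiset.card σ.cycleType) =
      orbitCount σ + 2 * σ.support.card := by
    have := orbitCount_add_card_support σ
    lia
  rw [Equiv.Perm.sign_of_cycleType, Equiv.Perm.sum_cycleType, ← pow_add, hparity, pow_add,
    pow_mul, Int.units_sq, one_pow, mul_one]

theorem neg_one_pow_orbitCount_eq_cast_sign {R : Type*} [Ring R] (σ : Equiv.Perm I) :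
    (-1 : R) ^ orbitCount σ = (-1) ^ Fintype.card I * ((Equiv.Perm.sign σ : ℤ) : R) := by
  exact_mod_cast congrArg (fun u : ℤˣ => ((u : ℤ) : R)) (neg_one_pow_orbitCount σ)

theorem prod_updateRow_apply {J R : Type*} [CommMonoid R] (A : Matrix I J R) (b : J → R)
    (i : I) (f : I → J) :
    ∏ v, A.updateRow i b v (f v) = b (f i) * ∏ v ∈ Finset.univ.erase i, A v (f v) := by
  rw [← Finset.mul_prod_erase _ _ (Finset.mem_univ i), Matrix.updateRow_self]
  congr 1
  refine Finset.prod_congr rfl fun v hv => ?_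
  rw [Matrix.updateRow_ne (Finset.ne_of_mem_erase hv)]

variable {R : Type*} [CommRing R] (A : Matrix I I R)

theorem sum_neg_one_pow_orbitCount_mul_prod :
    ∑ σ : Equiv.Perm I, (-1 : R) ^ orbitCount σ * ∏ v, A v (σ v) =
      (-1) ^ Fintype.card I * A.det := by
  rw [← Matrix.det_transpose, Matrix.det_apply', Finset.mul_sum]
  simp only [neg_one_pow_orbitCount_eq_cast_sign, Matrix.transpose_apply, mul_assoc]

theorem sum_neg_one_pow_orbitCount_mul_prod_erase (i j : I) :
    ∑ τ ∈ Finset.univ.filter (fun τ : Equiv.Perm I => τ j = i),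
        (-1 : R) ^ orbitCount τ * ∏ v ∈ Finset.univ.erase j, A v (τ v) =
      (-1) ^ Fintype.card I * A.adjugate i j := by
  rw [Matrix.adjugate_apply, ← sum_neg_one_pow_orbitCount_mul_prod, Finset.sum_filter]
  simp only [prod_updateRow_apply, Pi.single_apply, ite_mul, one_mul, zero_mul, mul_ite, mul_zero]

theorem matrix_inv_apply_mul_det (hA : IsUnit A.det) (i j : I) :
    A⁻¹ i j * A.det = A.adjugate i j := by
  rw [Matrix.inv_def, Matrix.smul_apply, smul_eq_mul, mul_right_comm,
    Ring.inverse_mul_cancel _ hA, one_mul]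

end

theorem stmt3_general {I R : Type*} [Fintype I] [CommRing R] (ξ : Matrix I I R)
    (hξ : IsUnit ξ.det) (i j : I) :
    ξ⁻¹ i j * (∑ σ : Equiv.Perm I, (-1 : R) ^ (orbitCount σ) * ∏ v : I, ξ v (σ v)) =
      ∑ τ ∈ Finset.univ.filter (fun τ : Equiv.Perm I => τ j = i),
        (-1 : R) ^ (orbitCount τ) * ∏ v ∈ Finset.univ.erase j, ξ v (τ v) := by
  rw [sum_neg_one_pow_orbitCount_mul_prod, sum_neg_one_pow_orbitCount_mul_prod_erase,
    mul_left_comm, matrix_inv_apply_mul_det ξ hξ]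

theorem stmt3 {I K : Type*} [Fintype I] [Field K] (ξ : Matrix I I K)
    (hξ : IsUnit ξ.det) (i j : I) :
    ξ⁻¹ i j * (∑ σ : Equiv.Perm I, (-1 : K) ^ (orbitCount σ) * ∏ v : I, ξ v (σ v)) =
      ∑ τ ∈ Finset.univ.filter (fun τ : Equiv.Perm I => τ j = i),
        (-1 : K) ^ (orbitCount τ) * ∏ v ∈ Finset.univ.erase j, ξ v (τ v) :=
  stmt3_general ξ hξ i j
end

section
/- Let 𝒜 be a finite category whose zeta matrix ζ over ℚ, defined by ζ(a,b) = card Hom(a,b), is invertible. Then for any objects a, b of 𝒜, if Hom(a,b) is empty (equivalently ζ(a,b) = 0), then ζ⁻¹(a,b) = 0. -/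
open CategoryTheory

attribute [local instance] Classical.propDecidable

/-- The zeta matrix of a finite category: `ζ(a,b) = card Hom(a,b)`, over `ℚ`. -/
noncomputable def zeta (𝒜 : Type*) [Category 𝒜] [∀ a b : 𝒜, Fintype (a ⟶ b)] :
    Matrix 𝒜 𝒜 ℚ :=
  Matrix.of fun a b => (Fintype.card (a ⟶ b) : ℚ)

/-!
Having a morphism `x ⟶ y` is a preorder on objects, by composition and identities, and the zeta
matrix is supported on it. For a matrix supported on a preorder `≤`, the indices above a fixed `a`
form an upper set, so splitting off these indices makes the matrix block triangular. The inverse is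
block triangular for the same splitting, and its `(a, b)` entry lies in the zero block when `a ≰ b`.
-/

theorem blockTriangular_of_forall_not_rel {n R : Type*} [Zero R] {r : n → n → Prop}
    (htrans : ∀ x y z, r x y → r y z → r x z) {M : Matrix n n R}
    (hM : ∀ x y, ¬ r x y → M x y = 0) (a : n) :
    M.BlockTriangular (r a) := by
  -- The block labels are propositions, ordered by implication, so `False < True`.
  intro x y hlt
  obtain ⟨hax, hay⟩ : r a x ∧ ¬ r a y := Classical.not_imp.mp hlt.not_ge
  exact hM x y fun hxy => hay (htrans a x y hax hxy)

theorem stmt5_general {n R : Type*} [Fintype n] [DecidableEq n] [CommRing R] {r : n → n → Prop}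
    (hrefl : ∀ x, r x x) (htrans : ∀ x y z, r x y → r y z → r x z) {M : Matrix n n R}
    (hdet : IsUnit M.det) (hM : ∀ x y, ¬ r x y → M x y = 0) {a b : n} (hab : ¬ r a b) :
    M⁻¹ a b = 0 := by
  have := M.invertibleOfIsUnitDet hdet
  have htri : M⁻¹.BlockTriangular (r a) :=
    Matrix.blockTriangular_inv_of_blockTriangular (blockTriangular_of_forall_not_rel htrans hM a)
  exact htri (lt_of_not_ge fun h => hab (h (hrefl a)))

theorem zeta_apply_eq_zero_iff {𝒜 : Type*} [Category 𝒜] [∀ a b : 𝒜, Fintype (a ⟶ b)] {a b : 𝒜} :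
    zeta 𝒜 a b = 0 ↔ IsEmpty (a ⟶ b) := by
  rw [zeta, Matrix.of_apply, Nat.cast_eq_zero, Fintype.card_eq_zero_iff]

theorem stmt5 {𝒜 : Type*} [Category 𝒜] [Fintype 𝒜] [∀ a b : 𝒜, Fintype (a ⟶ b)]
    (hζ : IsUnit (zeta 𝒜).det) (a b : 𝒜) (hab : IsEmpty (a ⟶ b)) :
    (zeta 𝒜)⁻¹ a b = 0 :=
  stmt5_general (r := fun x y => Nonempty (x ⟶ y)) (fun x => ⟨𝟙 x⟩)
    (fun _ _ _ ⟨f⟩ ⟨g⟩ => ⟨f ≫ g⟩) hζ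
    (fun _ _ h => zeta_apply_eq_zero_iff.mpr (not_nonempty_iff.mp h)) (not_nonempty_iff.mpr hab)
end

section
/- Let 𝒜 be a finite category in which every idempotent endomorphism is an identity. Then every circuit in 𝒜 consists entirely of isomorphisms: for any k ≥ 1, any objects c_0, c_1, …, c_k with c_k = c_0, and any morphisms f_i : c_{i-1} ⟶ c_i for i = 1, …, k, each f_i is an isomorphism. -/
open CategoryTheory

/-!
If `f : a ⟶ b` admits some morphism `b ⟶ a` back, then the endomorphisms of `a` that factor
through `f` form a nonempty subsemigroup of `End a`. When `End a` is finite this subsemigroup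
contains an idempotent, so if idempotents are identities, then `f ≫ r = 𝟙 a` for some `r`. But then
`r ≫ f` is idempotent too, hence also an identity, and `f` is an isomorphism.

In a circuit this applies to every composite `c 0 ⟶ c i`, and each arrow of the circuit is a
quotient of two such composites.
-/

theorem exists_isIdempotentElem_mem_of_finite {S : Type*} [Semigroup S] {s : Set S}
    (hfin : s.Finite) (hne : s.Nonempty) (hmul : ∀ᵉ (x ∈ s) (y ∈ s), x * y ∈ s) :
    ∃ e ∈ s, IsIdempotentElem e := by
  let _ : TopologicalSpace S := ⊥
  have : DiscreteTopology S := ⟨rfl⟩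
  exact exists_idempotent_in_compact_subsemigroup (fun _ => continuous_of_discreteTopology) s hne
    hfin.isCompact hmul

section

variable {C : Type*} [Category C]

theorem isSplitMono_of_finite_end {a b : C} [Finite (End a)]
    (hid : ∀ e : a ⟶ a, e ≫ e = e → e = 𝟙 a) (f : a ⟶ b) (g : b ⟶ a) : IsSplitMono f := by
  let throughF : Set (End a) := Set.range fun h : b ⟶ a => f ≫ h
  have mul_mem : ∀ᵉ (x ∈ throughF) (y ∈ throughF), x * y ∈ throughF := by
    rintro _ ⟨h, rfl⟩ _ ⟨h', rfl⟩
    exact ⟨h' ≫ f ≫ h, by simp only [End.mul_def, Category.assoc]⟩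
  obtain ⟨_, ⟨r, rfl⟩, hr⟩ :=
    exists_isIdempotentElem_mem_of_finite throughF.toFinite ⟨f ≫ g, g, rfl⟩ mul_mem
  exact ⟨⟨r, hid (f ≫ r) hr⟩⟩

theorem isIso_of_isSplitMono_of_idempotent_eq_id {a b : C} (f : a ⟶ b) [IsSplitMono f]
    (hid : ∀ e : b ⟶ b, e ≫ e = e → e = 𝟙 b) : IsIso f := by
  have idem : (retraction f ≫ f) ≫ retraction f ≫ f = retraction f ≫ f := by
    rw [Category.assoc, IsSplitMono.id_assoc]
  exact ⟨retraction f, IsSplitMono.id f, hid _ idem⟩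

theorem isIso_map_of_hom_top_bot {J : Type*} [Preorder J] [BoundedOrder J] (F : J ⥤ C)
    [Finite (End (F.obj ⊥))] (hid : ∀ (j : J) (e : F.obj j ⟶ F.obj j), e ≫ e = e → e = 𝟙 _)
    (g : F.obj ⊤ ⟶ F.obj ⊥) {i j : J} (φ : i ⟶ j) : IsIso (F.map φ) := by
  have isIso_from_bot (l : J) : IsIso (F.map (homOfLE (bot_le : ⊥ ≤ l))) := by
    have := isSplitMono_of_finite_end (hid ⊥) (F.map (homOfLE (bot_le : ⊥ ≤ l)))
      (F.map (homOfLE le_top) ≫ g)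
    exact isIso_of_isSplitMono_of_idempotent_eq_id _ (hid l)
  have fac : F.map (homOfLE bot_le) ≫ F.map φ = F.map (homOfLE bot_le) :=
    (F.map_comp _ _).symm
  exact IsIso.of_isIso_fac_left fac

theorem stmt7_general (k : ℕ) (c : Fin (k + 1) → C) [Finite (End (c 0))]
    (hid : ∀ (i : Fin (k + 1)) (e : c i ⟶ c i), e ≫ e = e → e = 𝟙 (c i))
    (hc : c (Fin.last k) = c 0) (f : ∀ i : Fin k, c i.castSucc ⟶ c i.succ) (i : Fin k) :
    IsIso (f i) := by
  let F := ComposableArrows.mkOfObjOfMapSucc c f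
  have : Finite (End (F.obj ⊥)) := inferInstanceAs (Finite (End (c 0)))
  rw [← ComposableArrows.mkOfObjOfMapSucc_map_succ c f i i.isLt]
  exact isIso_map_of_hom_top_bot F hid (eqToHom hc) _

end

theorem stmt7 {𝒜 : Type*} [Category 𝒜] [Fintype 𝒜] [∀ a b : 𝒜, Fintype (a ⟶ b)]
    (hid : ∀ (a : 𝒜) (f : a ⟶ a), f ≫ f = f → f = 𝟙 a)
    (k : ℕ) (hk : 1 ≤ k) (c : Fin (k + 1) → 𝒜) (hc : c (Fin.last k) = c 0)
    (f : ∀ i : Fin k, c i.castSucc ⟶ c i.succ) :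
    ∀ i : Fin k, IsIso (f i) :=
  have : Finite (End (c 0)) := inferInstanceAs (Finite (c 0 ⟶ c 0))
  stmt7_general k c (fun i => hid (c i)) hc f
end

section
/- Let 𝒜 be a finite skeletal category in which every idempotent endomorphism is an identity, and let ζ over ℚ be its zeta matrix, ζ(a,b) = card Hom(a,b). Then ζ is invertible, and for all objects a, b: ζ⁻¹(a,b) = ∑_{k=0}^{n-1} (-1)^k ∑_{c} ( ∏_{i=0}^{k-1} card Hom(c_i, c_{i+1}) ) / ( ∏_{i=0}^{k} card Hom(c_i, c_i) ), where n is the number of objects and the inner sum ranges over all injective sequences of objects c = (c_0, c_1, …, c_k) with c_0 = a and c_k = b. -/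
open CategoryTheory

attribute [local instance] Classical.propDecidable

/-! Write the matrix as `A = D (1 - J)` with `D` its diagonal, assumed nonsingular. If `A` is
triangular for a partial order, then `J` is strictly triangular, so the walks contributing to the
entries of `J ^ k` are strictly increasing, hence injective; none has more than `n` vertices, so
`J ^ n = 0` and the Neumann series `(1 + J + ⋯ + J ^ (n - 1)) D⁻¹` inverts `A`. The zeta matrix is
such a matrix: in a finite monoid whose only idempotent is `1` every element is a unit, so morphisms
`a ⟶ b` and `b ⟶ a` are isomorphisms, and the existence of a morphism is a partial order on the
objects of a skeletal category. -/

section Paths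

variable {ι : Type*}

/-- The weight of the walk `c 0, …, c k` in the complete digraph on `ι` with edge weights `M`:
the product of the weights of its `k` edges. -/
def pathWeight {R : Type*} [CommMonoid R] (M : Matrix ι ι R) {k : ℕ} (c : Fin (k + 1) → ι) : R :=
  ∏ i : Fin k, M (c i.castSucc) (c i.succ)

theorem pathWeight_cons {R : Type*} [CommMonoid R] (M : Matrix ι ι R) {k : ℕ} (a : ι)
    (c : Fin (k + 1) → ι) :
    pathWeight M (Fin.cons a c : Fin (k + 2) → ι) = M a (c 0) * pathWeight M c := by
  simp only [pathWeight, Fin.prod_univ_succ (n := k), Fin.castSucc_zero, Fin.cons_zero,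
    ← Fin.succ_castSucc, Fin.cons_succ]

theorem injective_of_pathWeight_ne_zero [PartialOrder ι] {R : Type*} [CommMonoidWithZero R]
    {M : Matrix ι ι R} (hM : ∀ i j, M i j ≠ 0 → i < j) {k : ℕ} {c : Fin (k + 1) → ι}
    (hc : pathWeight M c ≠ 0) : Function.Injective c := by
  refine (Fin.strictMono_iff_lt_succ.2 fun i => hM _ _ fun hi => hc ?_).injective
  exact Finset.prod_eq_zero (Finset.mem_univ i) hi

variable [Fintype ι]

theorem sum_paths_succ {R : Type*} [AddCommMonoid R] {k : ℕ} (a b : ι)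
    (f : (Fin (k + 2) → ι) → R) :
    ∑ c with c 0 = a ∧ c (Fin.last (k + 1)) = b, f c =
      ∑ j, ∑ c : Fin (k + 1) → ι with c 0 = j ∧ c (Fin.last k) = b, f (Fin.cons a c) := by
  simp only [Finset.sum_filter]
  rw [Finset.sum_comm, ← (Fin.consEquiv fun _ => ι).sum_comp, Fintype.sum_prod_type_right]
  refine Finset.sum_congr rfl fun c _ => ?_
  simp [Fin.consEquiv, ← Fin.succ_last, ite_and]

theorem pow_apply_eq_sum_pathWeight {R : Type*} [CommSemiring R] (M : Matrix ι ι R) (k : ℕ)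
    (a b : ι) :
    (M ^ k) a b = ∑ c : Fin (k + 1) → ι with c 0 = a ∧ c (Fin.last k) = b, pathWeight M c := by
  induction k generalizing a with
  | zero =>
    rw [Finset.sum_filter, ← (Equiv.funUnique (Fin 1) ι).symm.sum_comp]
    simp [pathWeight, Matrix.one_apply, ite_and]
  | succ k ih =>
    rw [pow_succ', Matrix.mul_apply, sum_paths_succ]
    refine Finset.sum_congr rfl fun j _ => ?_
    rw [ih, Finset.mul_sum]
    refine Finset.sum_congr rfl fun c hc => ?_
    rw [pathWeight_cons, (Finset.mem_filter.1 hc).2.1]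

theorem pow_card_eq_zero_of_ne_zero_imp_lt [PartialOrder ι] {R : Type*} [CommSemiring R]
    {M : Matrix ι ι R} (hM : ∀ i j, M i j ≠ 0 → i < j) : M ^ Fintype.card ι = 0 := by
  ext a b
  rw [pow_apply_eq_sum_pathWeight, Matrix.zero_apply]
  refine Finset.sum_eq_zero fun c _ => by_contra fun hc => ?_
  simpa using Fintype.card_le_of_injective c (injective_of_pathWeight_ne_zero hM hc)

end Paths

section Jacobi

variable {ι K : Type*} [Fintype ι] [Field K] {A : Matrix ι ι K}

/-- The iteration matrix `1 - D⁻¹ A` of Jacobi's method for `A`, where `D` is the diagonal of `A`.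
It is used through the factorization `A = D (1 - J)`, which requires the diagonal entries to be
nonzero. -/
noncomputable def jacobiMatrix (A : Matrix ι ι K) : Matrix ι ι K :=
  1 - Matrix.diagonal A.diag⁻¹ * A

theorem jacobiMatrix_apply_of_ne (A : Matrix ι ι K) {i j : ι} (hij : i ≠ j) :
    jacobiMatrix A i j = -((A i i)⁻¹ * A i j) := by
  simp [jacobiMatrix, Matrix.one_apply_ne hij]

theorem jacobiMatrix_apply_self {i : ι} (hi : A i i ≠ 0) : jacobiMatrix A i i = 0 := by
  simp [jacobiMatrix, hi]

theorem lt_of_jacobiMatrix_ne_zero [PartialOrder ι] (hdiag : ∀ i, A i i ≠ 0)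
    (hle : ∀ i j, A i j ≠ 0 → i ≤ j) (i j : ι) (hij : jacobiMatrix A i j ≠ 0) : i < j := by
  have hne : i ≠ j := by
    rintro rfl
    exact hij (jacobiMatrix_apply_self (hdiag i))
  rw [jacobiMatrix_apply_of_ne A hne, neg_ne_zero] at hij
  exact (hle i j (right_ne_zero_of_mul hij)).lt_of_ne hne

theorem diagonal_mul_diagonal_inv {d : ι → K} (hd : ∀ i, d i ≠ 0) :
    Matrix.diagonal d * Matrix.diagonal d⁻¹ = 1 := by
  simp [Matrix.diagonal_mul_diagonal, hd]

theorem diagonal_mul_one_sub_jacobiMatrix (hdiag : ∀ i, A i i ≠ 0) :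
    Matrix.diagonal A.diag * (1 - jacobiMatrix A) = A := by
  rw [jacobiMatrix, sub_sub_cancel, ← mul_assoc, diagonal_mul_diagonal_inv (d := A.diag) hdiag,
    one_mul]

theorem mul_geom_sum_jacobiMatrix_mul_diagonal (hdiag : ∀ i, A i i ≠ 0) {n : ℕ}
    (hn : jacobiMatrix A ^ n = 0) :
    A * ((∑ k ∈ Finset.range n, jacobiMatrix A ^ k) * Matrix.diagonal A.diag⁻¹) = 1 := by
  set D := Matrix.diagonal A.diag
  set J := jacobiMatrix A
  calc A * ((∑ k ∈ Finset.range n, J ^ k) * Matrix.diagonal A.diag⁻¹)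
    _ = D * ((1 - J) * ∑ k ∈ Finset.range n, J ^ k) * Matrix.diagonal A.diag⁻¹ := by
      rw [← mul_assoc, ← mul_assoc, diagonal_mul_one_sub_jacobiMatrix hdiag]
    _ = 1 := by
      rw [mul_neg_geom_sum, hn, sub_zero, mul_one, diagonal_mul_diagonal_inv (d := A.diag) hdiag]

theorem pathWeight_jacobiMatrix_mul_inv (A : Matrix ι ι K) {k : ℕ} {c : Fin (k + 1) → ι}
    (hc : Function.Injective c) :
    pathWeight (jacobiMatrix A) c * (A (c (Fin.last k)) (c (Fin.last k)))⁻¹ =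
      (-1) ^ k * (pathWeight A c / ∏ i, A (c i) (c i)) := by
  have hstep (i : Fin k) : jacobiMatrix A (c i.castSucc) (c i.succ) =
      -1 * ((A (c i.castSucc) (c i.castSucc))⁻¹ * A (c i.castSucc) (c i.succ)) := by
    rw [jacobiMatrix_apply_of_ne A (hc.ne i.castSucc_lt_succ.ne), neg_one_mul]
  simp only [pathWeight, hstep, Finset.prod_mul_distrib, Finset.prod_const, Finset.card_univ,
    Fintype.card_fin, Finset.prod_inv_distrib, Fin.prod_univ_castSucc (fun i => A (c i) (c i))]
  ring

theorem jacobiMatrix_pow_mul_diagonal_apply [PartialOrder ι] (hdiag : ∀ i, A i i ≠ 0)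
    (hle : ∀ i j, A i j ≠ 0 → i ≤ j) (k : ℕ) (a b : ι) :
    (jacobiMatrix A ^ k * Matrix.diagonal A.diag⁻¹) a b =
      (-1) ^ k * ∑ c ∈ Finset.univ.filter (fun c : Fin (k + 1) → ι =>
        Function.Injective c ∧ c 0 = a ∧ c (Fin.last k) = b),
          pathWeight A c / ∏ i, A (c i) (c i) := by
  rw [Matrix.mul_diagonal, pow_apply_eq_sum_pathWeight, Finset.sum_mul, Finset.mul_sum]
  symm
  refine Finset.sum_subset_zero_on_sdiff (fun c => ?_) (fun c hc => ?_) (fun c hc => ?_)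
  · simp only [Finset.mem_filter_univ]
    exact And.right
  · have hninj : ¬ Function.Injective c := by
      simp only [Finset.mem_sdiff, Finset.mem_filter_univ] at hc
      exact fun h => hc.2 ⟨h, hc.1⟩
    have hweight : pathWeight (jacobiMatrix A) c = 0 := not_ne_iff.1
      (mt (injective_of_pathWeight_ne_zero (lt_of_jacobiMatrix_ne_zero hdiag hle)) hninj)
    rw [hweight, zero_mul]
  · obtain ⟨hinj, -, rfl⟩ := (Finset.mem_filter_univ _).1 hc
    exact (pathWeight_jacobiMatrix_mul_inv A hinj).symm

theorem isUnit_det_and_inv_apply_eq_sum_pathWeight [PartialOrder ι] (hdiag : ∀ i, A i i ≠ 0)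
    (hle : ∀ i j, A i j ≠ 0 → i ≤ j) :
    IsUnit A.det ∧ ∀ a b : ι, A⁻¹ a b = ∑ k ∈ Finset.range (Fintype.card ι), (-1) ^ k *
      ∑ c ∈ Finset.univ.filter (fun c : Fin (k + 1) → ι =>
        Function.Injective c ∧ c 0 = a ∧ c (Fin.last k) = b),
          pathWeight A c / ∏ i, A (c i) (c i) := by
  have hinv := mul_geom_sum_jacobiMatrix_mul_diagonal hdiag
    (pow_card_eq_zero_of_ne_zero_imp_lt (lt_of_jacobiMatrix_ne_zero hdiag hle))
  refine ⟨Matrix.isUnit_det_of_right_inverse hinv, fun a b => ?_⟩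
  rw [Matrix.inv_eq_right_inv hinv, Finset.sum_mul, Matrix.sum_apply]
  exact Finset.sum_congr rfl fun k _ => jacobiMatrix_pow_mul_diagonal_apply hdiag hle k a b

end Jacobi

theorem isUnit_of_forall_isIdempotentElem_eq_one {M : Type*} [Monoid M] [Finite M]
    (hM : ∀ y : M, IsIdempotentElem y → y = 1) (x : M) : IsUnit x := by
  let : TopologicalSpace M := ⊥
  have : DiscreteTopology M := ⟨rfl⟩
  -- The positive powers of `x` form a compact semigroup for the discrete topology.
  obtain ⟨y, ⟨n, rfl⟩, hy⟩ := exists_idempotent_in_compact_subsemigroup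
    (fun _ : M => continuous_of_discreteTopology) (Set.range fun n : ℕ => x ^ (n + 1))
    (Set.range_nonempty _) (Set.toFinite _).isCompact
    (by rintro _ ⟨m, rfl⟩ _ ⟨n, rfl⟩; exact ⟨m + 1 + n, pow_add x (m + 1) (n + 1)⟩)
  exact .of_pow_eq_one (hM _ hy) n.succ_ne_zero

section Category

variable {𝒜 : Type*} [Category 𝒜]

theorem isIso_of_forall_idempotent_eq_id {a : 𝒜} [Finite (a ⟶ a)]
    (hid : ∀ f : a ⟶ a, f ≫ f = f → f = 𝟙 a) (f : a ⟶ a) : IsIso f :=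
  have : Finite (End a) := inferInstanceAs (Finite (a ⟶ a))
  (isUnit_iff_isIso f).1 (isUnit_of_forall_isIdempotentElem_eq_one (M := End a) hid f)

theorem isIso_of_isIso_comp_of_isIso_comp {a b c d : 𝒜} (f : a ⟶ b) (g : b ⟶ c) (h : c ⟶ d)
    [IsIso (f ≫ g)] [IsIso (g ≫ h)] : IsIso g :=
  have : Mono g := mono_of_mono g h
  have : IsSplitEpi g := ⟨⟨inv (f ≫ g) ≫ f, by simp⟩⟩
  isIso_of_mono_of_isSplitEpi g

theorem eq_of_hom_of_hom [∀ a : 𝒜, Finite (a ⟶ a)] (hskel : Skeletal 𝒜)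
    (hid : ∀ (a : 𝒜) (f : a ⟶ a), f ≫ f = f → f = 𝟙 a) {a b : 𝒜} (f : a ⟶ b) (g : b ⟶ a) :
    a = b :=
  have := isIso_of_forall_idempotent_eq_id (hid a) (f ≫ g)
  have := isIso_of_forall_idempotent_eq_id (hid b) (g ≫ f)
  have := isIso_of_isIso_comp_of_isIso_comp g f g
  hskel ⟨asIso f⟩

/-- The order on the objects of a category in which `a ≤ b` when there is a morphism `a ⟶ b`. It
makes the zeta matrix triangular. -/
abbrev homPartialOrder (hanti : ∀ a b : 𝒜, (a ⟶ b) → (b ⟶ a) → a = b) : PartialOrder 𝒜 where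
  le a b := Nonempty (a ⟶ b)
  le_refl a := ⟨𝟙 a⟩
  le_trans := fun _ _ _ ⟨f⟩ ⟨g⟩ => ⟨f ≫ g⟩
  le_antisymm := fun a b ⟨f⟩ ⟨g⟩ => hanti a b f g

theorem zeta_apply_ne_zero_iff [∀ a b : 𝒜, Fintype (a ⟶ b)] {a b : 𝒜} :
    zeta 𝒜 a b ≠ 0 ↔ Nonempty (a ⟶ b) := by
  simp [zeta, ← Fintype.card_pos_iff, Nat.pos_iff_ne_zero]

end Category

theorem stmt8_general {𝒜 : Type*} [Category 𝒜] [Fintype 𝒜] [∀ a b : 𝒜, Fintype (a ⟶ b)]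
    (hanti : ∀ a b : 𝒜, (a ⟶ b) → (b ⟶ a) → a = b) :
    IsUnit (zeta 𝒜).det ∧ ∀ a b : 𝒜,
      (zeta 𝒜)⁻¹ a b =
        ∑ k ∈ Finset.range (Fintype.card 𝒜), (-1 : ℚ) ^ k *
          ∑ c ∈ Finset.univ.filter (fun c : Fin (k + 1) → 𝒜 =>
              Function.Injective c ∧ c 0 = a ∧ c (Fin.last k) = b),
            (∏ i : Fin k, (Fintype.card (c i.castSucc ⟶ c i.succ) : ℚ)) /
              (∏ i : Fin (k + 1), (Fintype.card (c i ⟶ c i) : ℚ)) :=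
  let := homPartialOrder hanti
  isUnit_det_and_inv_apply_eq_sum_pathWeight (A := zeta 𝒜)
    (fun a => zeta_apply_ne_zero_iff.2 ⟨𝟙 a⟩) fun _ _ => zeta_apply_ne_zero_iff.1

theorem stmt8 {𝒜 : Type*} [Category 𝒜] [Fintype 𝒜] [∀ a b : 𝒜, Fintype (a ⟶ b)]
    (hskel : Skeletal 𝒜)
    (hid : ∀ (a : 𝒜) (f : a ⟶ a), f ≫ f = f → f = 𝟙 a) :
    IsUnit (zeta 𝒜).det ∧ ∀ a b : 𝒜,
      (zeta 𝒜)⁻¹ a b =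
        ∑ k ∈ Finset.range (Fintype.card 𝒜), (-1 : ℚ) ^ k *
          ∑ c ∈ Finset.univ.filter (fun c : Fin (k + 1) → 𝒜 =>
              Function.Injective c ∧ c 0 = a ∧ c (Fin.last k) = b),
            (∏ i : Fin k, (Fintype.card (c i.castSucc ⟶ c i.succ) : ℚ)) /
              (∏ i : Fin (k + 1), (Fintype.card (c i ⟶ c i) : ℚ)) :=
  stmt8_general fun _ _ => eq_of_hom_of_hom hskel hid
end

section
/- Let P be a finite partially ordered set and let ζ : P × P → ℚ be defined by ζ(a,b) = 1 if a ≤ b and ζ(a,b) = 0 otherwise. Then ζ is invertible, and for all a, b ∈ P: ζ⁻¹(a,b) = ∑_{k=0}^{|P|-1} (-1)^k · N_k(a,b), where N_k(a,b) is the number of strictly increasing chains a = c_0 < c_1 < ⋯ < c_k = b in P (i.e. the number of strictly monotone maps c : Fin(k+1) → P with c(0) = a and c(k) = b). -/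
attribute [local instance] Classical.propDecidable

/-- The zeta matrix of a finite poset over `ℚ`: `ζ(a,b) = 1` if `a ≤ b`, else `0`. -/
noncomputable def zetaPoset (P : Type*) [Fintype P] [PartialOrder P] : Matrix P P ℚ :=
  Matrix.of fun a b => if a ≤ b then 1 else 0

/-!
Write `ζ = 1 + η`, where `η` is the matrix of the strict order. The powers of `η` count strict
chains, so `η ^ |P| = 0`, since no chain has more than `|P|` points. Hence `ζ` is unipotent, and its
inverse is the finite geometric series `∑ k < |P|, (-η) ^ k`.
-/

open Finset

section Relation

variable {α R : Type*}

/-- The `0`-`1` matrix of a relation. For `≤` it is the zeta matrix of an order, and for `<` the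
matrix whose powers count strict chains. -/
noncomputable def relMatrix (R : Type*) [Zero R] [One R] (r : α → α → Prop) : Matrix α α R :=
  Matrix.of fun a b => if r a b then 1 else 0

theorem relMatrix_apply [Zero R] [One R] (r : α → α → Prop) (a b : α) :
    relMatrix R r a b = if r a b then 1 else 0 :=
  rfl

variable [Fintype α]

/-- The `r`-paths with `k` steps from `a` to `b`, each encoded by its sequence of `k + 1` points. -/
noncomputable def relPaths (r : α → α → Prop) (k : ℕ) (a b : α) : Finset (Fin (k + 1) → α) :=
  {c | (∀ i : Fin k, r (c i.castSucc) (c i.succ)) ∧ c 0 = a ∧ c (Fin.last k) = b}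

variable (r : α → α → Prop)

theorem card_relPaths_zero (a b : α) : #(relPaths r 0 a b) = if a = b then 1 else 0 := by
  split_ifs with hab
  · refine card_eq_one.2 ⟨fun _ => a, ?_⟩
    ext c
    simp [relPaths, hab, funext_iff, Fin.forall_fin_one]
  · refine card_eq_zero.2 (filter_eq_empty_iff.2 ?_)
    rintro c - ⟨-, rfl, hb⟩
    exact hab hb

variable {r}

theorem mem_relPaths_succ {k : ℕ} {a b : α} {c : Fin (k + 2) → α} :
    c ∈ relPaths r (k + 1) a b ↔ c 0 = a ∧ r a (c 1) ∧ Fin.tail c ∈ relPaths r k (c 1) b := by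
  simp only [relPaths, mem_filter_univ, Fin.forall_fin_succ (n := k), Fin.tail]
  constructor
  · rintro ⟨⟨h₀, h⟩, rfl, hb⟩
    exact ⟨rfl, h₀, h, rfl, hb⟩
  · rintro ⟨rfl, h₀, h, -, hb⟩
    exact ⟨⟨h₀, h⟩, rfl, hb⟩

theorem apply_zero_of_mem_relPaths {k : ℕ} {a b : α} {c : Fin (k + 1) → α}
    (hc : c ∈ relPaths r k a b) : c 0 = a :=
  ((mem_filter_univ c).1 hc).2.1

variable (r)

theorem card_relPaths_succ (k : ℕ) (a b : α) :
    #(relPaths r (k + 1) a b) = ∑ x with r a x, #(relPaths r k x b) := by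
  rw [← card_sigma]
  refine card_nbij' (fun c => ⟨c 1, Fin.tail c⟩) (fun p => Fin.cons a p.2) ?_ ?_ ?_ ?_
  · intro c hc
    simpa using (mem_relPaths_succ.1 hc).2
  · rintro ⟨x, c⟩ hc
    obtain ⟨hax, hc⟩ : r a x ∧ c ∈ relPaths r k x b := by simpa using hc
    obtain rfl := apply_zero_of_mem_relPaths hc
    exact mem_relPaths_succ.2 ⟨rfl, hax, hc⟩
  · intro c hc
    obtain ⟨rfl, -⟩ := mem_relPaths_succ.1 hc
    exact Fin.cons_self_tail c
  · rintro ⟨x, c⟩ hc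
    obtain ⟨-, hc⟩ : r a x ∧ c ∈ relPaths r k x b := by simpa using hc
    obtain rfl := apply_zero_of_mem_relPaths hc
    rfl

theorem relMatrix_pow_apply [Semiring R] (k : ℕ) (a b : α) :
    (relMatrix R r ^ k) a b = #(relPaths r k a b) := by
  induction k generalizing a with
  | zero => simp [card_relPaths_zero, Matrix.one_apply]
  | succ k ih =>
    simp [pow_succ', Matrix.mul_apply, ih, relMatrix_apply, card_relPaths_succ, sum_filter]

end Relation

section Order

theorem relMatrix_le_eq_one_add (P R : Type*) [PartialOrder P] [Semiring R] :
    (relMatrix R (· ≤ ·) : Matrix P P R) = 1 + relMatrix R (· < ·) := by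
  ext a b
  by_cases hab : a = b <;> simp [relMatrix_apply, hab, le_iff_lt_or_eq]

variable {P : Type*} [Fintype P]

theorem relPaths_lt_eq_filter_strictMono [Preorder P] (k : ℕ) (a b : P) :
    relPaths (· < ·) k a b =
      ({c | StrictMono c ∧ c 0 = a ∧ c (Fin.last k) = b} : Finset (Fin (k + 1) → P)) := by
  simp only [relPaths, Fin.strictMono_iff_lt_succ]

theorem relPaths_lt_eq_empty [Preorder P] {k : ℕ} (hk : Fintype.card P ≤ k) (a b : P) :
    relPaths (· < ·) k a b = ∅ := by
  rw [relPaths_lt_eq_filter_strictMono, filter_eq_empty_iff]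
  rintro c - ⟨hc, -⟩
  have hcard : k + 1 ≤ Fintype.card P := by
    simpa using Fintype.card_le_of_injective c hc.injective
  omega

variable (P) (R : Type*)

theorem relMatrix_lt_pow_card [Preorder P] [Semiring R] :
    (relMatrix R (· < ·) : Matrix P P R) ^ Fintype.card P = 0 := by
  ext a b
  simp [relMatrix_pow_apply, relPaths_lt_eq_empty le_rfl]

theorem relMatrix_le_mul_sum_neg_pow [PartialOrder P] [Ring R] :
    (relMatrix R (· ≤ ·) : Matrix P P R) *
      ∑ k ∈ range (Fintype.card P), (-relMatrix R (· < ·)) ^ k = 1 := by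
  rw [relMatrix_le_eq_one_add, ← sub_neg_eq_add, mul_neg_geom_sum, neg_pow,
    relMatrix_lt_pow_card, mul_zero, sub_zero]

end Order

theorem stmt9_general (R : Type*) [CommRing R] {P : Type*} [Fintype P] [PartialOrder P] :
    IsUnit (relMatrix R (· ≤ ·) : Matrix P P R).det ∧ ∀ a b : P,
      (relMatrix R (· ≤ ·) : Matrix P P R)⁻¹ a b =
        ∑ k ∈ range (Fintype.card P), (-1 : R) ^ k *
          #{c : Fin (k + 1) → P | StrictMono c ∧ c 0 = a ∧ c (Fin.last k) = b} := by
  have hinv := relMatrix_le_mul_sum_neg_pow P R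
  refine ⟨Matrix.isUnit_det_of_right_inverse hinv, fun a b => ?_⟩
  rw [Matrix.inv_eq_right_inv hinv, Matrix.sum_apply]
  refine sum_congr rfl fun k _ => ?_
  rw [← relPaths_lt_eq_filter_strictMono, ← relMatrix_pow_apply, ← neg_one_smul R (relMatrix R _),
    smul_pow, Matrix.smul_apply, smul_eq_mul]

theorem stmt9 {P : Type*} [Fintype P] [PartialOrder P] :
    IsUnit (zetaPoset P).det ∧ ∀ a b : P,
      (zetaPoset P)⁻¹ a b =
        ∑ k ∈ Finset.range (Fintype.card P), (-1 : ℚ) ^ k *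
          ((Finset.univ.filter (fun c : Fin (k + 1) → P =>
              StrictMono c ∧ c 0 = a ∧ c (Fin.last k) = b)).card : ℚ) :=
  stmt9_general ℚ
end

section
/- Let (X,d) be a finite nonempty metric space and for t > 0 let ζ_t : X × X → ℝ be the matrix ζ_t(x,y) = exp(−t·d(x,y)). Then as t → ∞, the sum of the entries of ζ_t⁻¹ tends to the number of points of X: lim_{t→∞} ∑_{x,y ∈ X} ζ_t⁻¹(x,y) = |X| (in particular ζ_t is invertible for all sufficiently large t). -/
attribute [local instance] Classical.propDecidable

/-!
As `t → ∞` the similarity matrix tends entrywise to the identity matrix, at which the determinant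
is nonzero and inversion is continuous. So the magnitude tends to the magnitude of the identity
matrix, which is the number of points.
-/

open Filter Topology

section Magnitude

variable {n : Type*} [Fintype n] [DecidableEq n]

/-- The magnitude of a square matrix in the sense of Leinster, here only for invertible matrices:
at a singular matrix `A` the value is the junk value `0`, coming from `A⁻¹ = 0`, even if `A` has a
weighting and a coweighting. -/
noncomputable def magnitude {R : Type*} [CommRing R] (A : Matrix n n R) : R :=
  ∑ i, ∑ j, A⁻¹ i j

theorem magnitude_one {R : Type*} [CommRing R] :
    magnitude (1 : Matrix n n R) = Fintype.card n := by
  simp [magnitude, Matrix.one_apply]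

variable {K α : Type*} [Field K] [TopologicalSpace K] {l : Filter α} {A : α → Matrix n n K}
  {B : Matrix n n K}

theorem eventually_isUnit_det_of_tendsto [IsTopologicalRing K] [T1Space K]
    (hA : Tendsto A l (𝓝 B)) (hB : IsUnit B.det) : ∀ᶠ a in l, IsUnit (A a).det := by
  have hdet : Tendsto (fun a => (A a).det) l (𝓝 B.det) :=
    (continuous_id.matrix_det.tendsto B).comp hA
  simpa only [isUnit_iff_ne_zero] using hdet.eventually_ne hB.ne_zero

theorem tendsto_magnitude [IsTopologicalDivisionRing K]
    (hA : Tendsto A l (𝓝 B)) (hB : IsUnit B.det) :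
    Tendsto (fun a => magnitude (A a)) l (𝓝 (magnitude B)) := by
  have hinverse : ContinuousAt Ring.inverse B.det := by
    rw [Ring.inverse_eq_inv']
    exact continuousAt_inv₀ hB.ne_zero
  have hinv : Tendsto (fun a => (A a)⁻¹) l (𝓝 B⁻¹) :=
    (continuousAt_matrix_inv B hinverse).tendsto.comp hA
  exact tendsto_finsetSum _ fun i _ => tendsto_finsetSum _ fun j _ =>
    (hinv.apply_nhds i).apply_nhds j

end Magnitude

/-- The similarity matrix `ζ_t` of a space with distance function `d`, scaled by `t`. The distance
is an arbitrary function, so that it may fail to be symmetric or to satisfy the triangle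
inequality. -/
noncomputable def similarityMatrix {X : Type*} (d : X → X → ℝ) (t : ℝ) : Matrix X X ℝ :=
  Matrix.of fun x y => Real.exp (-t * d x y)

theorem tendsto_similarityMatrix_atTop {X : Type*} [DecidableEq X] {d : X → X → ℝ}
    (hself : ∀ x, d x x = 0) (hpos : ∀ x y, x ≠ y → 0 < d x y) :
    Tendsto (similarityMatrix d) atTop (𝓝 1) := by
  refine tendsto_pi_nhds.2 fun x => tendsto_pi_nhds.2 fun y => ?_
  rcases eq_or_ne x y with rfl | hxy
  · simp [similarityMatrix, hself]
  · rw [Matrix.one_apply_ne hxy]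
    exact Real.tendsto_exp_atBot.comp
      (tendsto_neg_atTop_atBot.atBot_mul_const (hpos x y hxy))

theorem stmt13_general {X : Type*} [Fintype X] [DecidableEq X] {d : X → X → ℝ}
    (hself : ∀ x, d x x = 0) (hpos : ∀ x y, x ≠ y → 0 < d x y) :
    (∀ᶠ t in atTop, IsUnit (similarityMatrix d t).det) ∧
      Tendsto (fun t => magnitude (similarityMatrix d t)) atTop (𝓝 (Fintype.card X : ℝ)) := by
  have hζ := tendsto_similarityMatrix_atTop hself hpos
  have hone : IsUnit (1 : Matrix X X ℝ).det := by simp only [Matrix.det_one, isUnit_one]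
  refine ⟨eventually_isUnit_det_of_tendsto hζ hone, ?_⟩
  simpa only [magnitude_one] using tendsto_magnitude hζ hone

theorem stmt13 {X : Type*} [MetricSpace X] [Fintype X] [Nonempty X] :
    (∀ᶠ t : ℝ in Filter.atTop,
        IsUnit (Matrix.of fun x y : X => Real.exp (-t * dist x y)).det) ∧
      Filter.Tendsto
        (fun t : ℝ =>
          ∑ x : X, ∑ y : X, (Matrix.of fun x y : X => Real.exp (-t * dist x y))⁻¹ x y)
        Filter.atTop (nhds (Fintype.card X : ℝ)) :=
  stmt13_general dist_self fun _ _ => dist_pos.2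
end

section
/- Let (X,d) be a finite metric space with n = |X| ≥ 2 points. Then for every natural number k with k ≤ n − 2: ∑_{σ ∈ Perm(X)} (-1)^{c(σ)} · ( ∑_{x ∈ X} d(x, σ(x)) )^k = 0, where c(σ) is the number of orbits of σ on X (cycles including fixed points). -/
attribute [local instance] Classical.propDecidable

/-!
Up to the factor `(-1) ^ n`, the sign `(-1) ^ c(σ)` is the signature of `σ`. Expanding the `k`-th
power of `∑ x, d(x, σ x)` gives monomials that involve the values of `σ` at no more than `k ≤ n - 2`
points. The signed sum of such a monomial over all `σ` is the determinant of a matrix whose columns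
at the remaining points, of which there are at least two, are all equal to the constant vector `1`.
-/

open Equiv

theorem neg_one_pow_orbitCount_s14 {X R : Type*} [Fintype X] [Ring R] (σ : Perm X) :
    (-1 : R) ^ orbitCount σ = (-1) ^ Fintype.card X * (Perm.sign σ : ℤ) := by
  have hle : σ.support.card ≤ Fintype.card X := Finset.card_le_univ _
  rw [Perm.sign_of_cycleType, Perm.sum_cycleType, orbitCount]
  push_cast
  rw [← pow_add]
  exact neg_one_pow_congr (by grind)

section SignedSum

variable {X ι R : Type*} [Fintype X] [Fintype ι] [CommRing R]

theorem exists_ne_notMem_range_of_card_add_two_le (p : ι → X)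
    (h : Fintype.card ι + 2 ≤ Fintype.card X) :
    ∃ a b, a ≠ b ∧ a ∉ Set.range p ∧ b ∉ Set.range p := by
  have himage : (Finset.univ.image p).card ≤ Fintype.card ι := Finset.card_image_le
  have hcompl : 1 < (Finset.univ.image p)ᶜ.card := by
    rw [Finset.card_compl]
    omega
  obtain ⟨a, ha, b, hb, hab⟩ := Finset.one_lt_card.mp hcompl
  exact ⟨a, b, hab, by simpa using ha, by simpa using hb⟩

theorem sum_sign_mul_prod_comp_eq_det (p : ι → X) (g : ι → X → R) :
    ∑ σ : Perm X, ((Perm.sign σ : ℤ) : R) * ∏ i, g i (σ (p i)) =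
      (Matrix.of fun y x ↦ ∏ i with p i = x, g i y).det := by
  rw [Matrix.det_apply']
  refine Finset.sum_congr rfl fun σ _ ↦ congrArg _ ?_
  simp only [Matrix.of_apply]
  rw [← Finset.prod_fiberwise Finset.univ p]
  refine Finset.prod_congr rfl fun x _ ↦ Finset.prod_congr rfl fun i hi ↦ ?_
  rw [(Finset.mem_filter.mp hi).2]

theorem sum_sign_mul_prod_comp_eq_zero {p : ι → X} {a b : X} (hab : a ≠ b)
    (ha : a ∉ Set.range p) (hb : b ∉ Set.range p) (g : ι → X → R) :
    ∑ σ : Perm X, ((Perm.sign σ : ℤ) : R) * ∏ i, g i (σ (p i)) = 0 := by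
  have prod_fiber_eq_one {x : X} (hx : x ∉ Set.range p) (y : X) :
      ∏ i with p i = x, g i y = 1 := by
    rw [Finset.filter_false_of_mem fun i _ hi ↦ hx ⟨i, hi⟩, Finset.prod_empty]
  rw [sum_sign_mul_prod_comp_eq_det]
  refine Matrix.det_zero_of_column_eq hab fun y ↦ ?_
  simp only [Matrix.of_apply, prod_fiber_eq_one ha, prod_fiber_eq_one hb]

theorem sum_sign_mul_prod_sum_eq_zero (f : ι → X → X → R)
    (h : Fintype.card ι + 2 ≤ Fintype.card X) :
    ∑ σ : Perm X, ((Perm.sign σ : ℤ) : R) * ∏ i, ∑ x, f i x (σ x) = 0 := by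
  simp_rw [Fintype.prod_sum, Finset.mul_sum]
  rw [Finset.sum_comm]
  refine Finset.sum_eq_zero fun p _ ↦ ?_
  obtain ⟨a, b, hab, ha, hb⟩ := exists_ne_notMem_range_of_card_add_two_le p h
  exact sum_sign_mul_prod_comp_eq_zero hab ha hb fun i ↦ f i (p i)

end SignedSum

theorem stmt14_general {X R : Type*} [Fintype X] [CommRing R] (f : X → X → R) (k : ℕ)
    (hk : k + 2 ≤ Fintype.card X) :
    ∑ σ : Perm X, (-1 : R) ^ orbitCount σ * (∑ x, f x (σ x)) ^ k = 0 := by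
  have hsum : ∑ σ : Perm X, ((Perm.sign σ : ℤ) : R) * (∑ x, f x (σ x)) ^ k = 0 := by
    simpa using sum_sign_mul_prod_sum_eq_zero (fun _ : Fin k ↦ f) (by simpa using hk)
  simp_rw [neg_one_pow_orbitCount_s14, mul_assoc]
  rw [← Finset.mul_sum, hsum, mul_zero]

theorem stmt14 {X : Type*} [MetricSpace X] [Fintype X]
    (hn : 2 ≤ Fintype.card X) (k : ℕ) (hk : k ≤ Fintype.card X - 2) :
    ∑ σ : Equiv.Perm X, (-1 : ℝ) ^ (orbitCount σ) * (∑ x : X, dist x (σ x)) ^ k = 0 :=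
  stmt14_general dist k (by omega)
end

section
/- Let (X,d) be a finite metric space with points enumerated x_1, …, x_n. Then ∑_{σ ∈ Perm(X)} (-1)^{n + c(σ)} · ( ∑_{x ∈ X} d(x, σ(x)) )^{n} = n! · ( C_n + det D ), where D = (d(x_i, x_j))_{i,j} is the distance matrix, C_n = (1/2) ∑_{i ≠ j} det(N_{i,j}) with N_{i,j} the n×n matrix whose l-th column is the all-ones vector if l = i, the vector of squared distances (d(x_j, x_1)², …, d(x_j, x_n)²)ᵀ if l = j, and the vector (d(x_l, x_1), …, d(x_l, x_n))ᵀ otherwise, and c(σ) is the number of orbits of σ on X (cycles including fixed points). -/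
attribute [local instance] Classical.propDecidable

/-!
Since `(-1) ^ (n + c(σ))` is the sign of `σ`, expanding the power by the multinomial theorem turns
the sum over permutations into a combination, over exponent vectors `k` of total degree `n`, of the
determinants with columns `d_l^(k l)`. Two zero exponents give two constant columns, so only
exponent vectors with at most one zero survive: the all-ones vector, with multinomial coefficient
`n!`, and the vectors with one `0`, one `2` and `1` elsewhere, each with multinomial coefficient
`n! / 2`.
-/

theorem eq_one_of_sum_eq_card {ι : Type*} [Fintype ι] {k : ι → ℕ}
    (hk : ∑ l, k l = Fintype.card ι) (hpos : ∀ l, k l ≠ 0) : k = 1 := by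
  have hle : ∀ l ∈ Finset.univ, 1 ≤ k l := fun l _ => Nat.one_le_iff_ne_zero.2 (hpos l)
  have heq := (Finset.sum_eq_sum_iff_of_le hle).1 (by simp [hk])
  exact funext fun l => (heq l (Finset.mem_univ l)).symm

section ZeroTwoExponent

variable {ι : Type*} [DecidableEq ι] {i j l : ι}

/-- The exponent vector of the matrix `N_{i,j}` in the definition of `C_n`: it is `0` at `i`, `2`
at `j` and `1` elsewhere. The value at `i` is `0` also when `i = j`. -/
def zeroTwoExponent (i j : ι) : ι → ℕ :=
  fun l => if l = i then 0 else if l = j then 2 else 1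

theorem zeroTwoExponent_eq_zero_iff : zeroTwoExponent i j l = 0 ↔ l = i := by
  unfold zeroTwoExponent
  split_ifs <;> simp_all

theorem zeroTwoExponent_eq_two_iff (h : i ≠ j) : zeroTwoExponent i j l = 2 ↔ l = j := by
  unfold zeroTwoExponent
  split_ifs <;> simp_all

theorem zeroTwoExponent_ne_one : zeroTwoExponent i j ≠ 1 := fun h =>
  zero_ne_one ((zeroTwoExponent_eq_zero_iff.2 rfl).symm.trans (congrFun h i))

theorem zeroTwoExponent_injOn_offDiag (s : Finset ι) :
    Set.InjOn (fun p : ι × ι => zeroTwoExponent p.1 p.2) s.offDiag := by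
  rintro ⟨i, j⟩ hij ⟨i', j'⟩ hij' heq
  have hne : i ≠ j := (Finset.mem_offDiag.1 hij).2.2
  have hne' : i' ≠ j' := (Finset.mem_offDiag.1 hij').2.2
  have hi : i = i' := zeroTwoExponent_eq_zero_iff.1 <|
    (congrFun heq i).symm.trans (zeroTwoExponent_eq_zero_iff.2 rfl)
  have hj : j = j' := (zeroTwoExponent_eq_two_iff hne').1 <|
    (congrFun heq j).symm.trans ((zeroTwoExponent_eq_two_iff hne).2 rfl)
  rw [hi, hj]

theorem zeroTwoExponent_add_single (h : i ≠ j) :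
    zeroTwoExponent i j + Pi.single i 1 = 1 + Pi.single j 1 := by
  ext l
  simp only [Pi.add_apply, Pi.single_apply, Pi.one_apply, zeroTwoExponent]
  split_ifs <;> simp_all

variable [Fintype ι]

theorem sum_zeroTwoExponent (h : i ≠ j) : ∑ l, zeroTwoExponent i j l = Fintype.card ι := by
  have hsum := congrArg (fun k : ι → ℕ => ∑ l, k l) (zeroTwoExponent_add_single h)
  simpa [Finset.sum_add_distrib] using hsum

theorem prod_factorial_zeroTwoExponent (h : i ≠ j) :
    ∏ l, (zeroTwoExponent i j l).factorial = 2 := by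
  have hpt (l : ι) : (zeroTwoExponent i j l).factorial = if l = j then 2 else 1 := by
    unfold zeroTwoExponent
    split_ifs <;> simp_all
  simp [hpt]

theorem two_mul_multinomial_zeroTwoExponent (h : i ≠ j) :
    2 * Nat.multinomial Finset.univ (zeroTwoExponent i j) = (Fintype.card ι).factorial := by
  simpa only [prod_factorial_zeroTwoExponent h, sum_zeroTwoExponent h]
    using Nat.multinomial_spec Finset.univ (zeroTwoExponent i j)

theorem eq_zeroTwoExponent_of_sum_eq_card {k : ι → ℕ} (hk : ∑ l, k l = Fintype.card ι)
    (hi : ∀ l, k l = 0 ↔ l = i) : ∃ j, i ≠ j ∧ k = zeroTwoExponent i j := by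
  have hki : k i = 0 := (hi i).2 rfl
  obtain ⟨j, hj⟩ : ∃ j, 1 < k j := by
    by_contra! hle
    have hlt : ∑ l, k l < ∑ _l : ι, 1 :=
      Finset.sum_lt_sum (fun l _ => hle l) ⟨i, Finset.mem_univ i, by omega⟩
    simp [hk] at hlt
  have hij : i ≠ j := by
    rintro rfl
    omega
  have hle : ∀ l ∈ Finset.univ, zeroTwoExponent i j l ≤ k l := by
    intro l _
    have := hi l
    unfold zeroTwoExponent
    grind
  have heq := (Finset.sum_eq_sum_iff_of_le hle).1 ((sum_zeroTwoExponent hij).trans hk.symm)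
  exact ⟨j, hij, funext fun l => (heq l (Finset.mem_univ l)).symm⟩

theorem eq_one_or_eq_zeroTwoExponent {k : ι → ℕ} (hk : ∑ l, k l = Fintype.card ι)
    (hzero : ∀ i j, k i = 0 → k j = 0 → i = j) :
    k = 1 ∨ ∃ i j, i ≠ j ∧ k = zeroTwoExponent i j := by
  by_cases h : ∃ i, k i = 0
  · obtain ⟨i, hi⟩ := h
    have hiff (l : ι) : k l = 0 ↔ l = i := ⟨fun hl => hzero l i hl hi, fun hl => hl ▸ hi⟩
    exact .inr ⟨i, eq_zeroTwoExponent_of_sum_eq_card hk hiff⟩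
  · exact .inl (eq_one_of_sum_eq_card hk (not_exists.1 h))

theorem sum_piAntidiag_univ_card {M : Type*} [AddCommMonoid M] (f : (ι → ℕ) → M)
    (hf : ∀ k i j, i ≠ j → k i = 0 → k j = 0 → f k = 0) :
    ∑ k ∈ Finset.piAntidiag Finset.univ (Fintype.card ι), f k
      = f 1 + ∑ p ∈ (Finset.univ : Finset ι).offDiag, f (zeroTwoExponent p.1 p.2) := by
  set S : Finset (ι → ℕ) :=
    Finset.univ.offDiag.image fun p : ι × ι => zeroTwoExponent p.1 p.2 with hS
  have hone : (1 : ι → ℕ) ∉ S := by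
    simp only [hS, Finset.mem_image, not_exists, not_and]
    exact fun p _ => zeroTwoExponent_ne_one
  have hsub : insert 1 S ⊆ Finset.piAntidiag Finset.univ (Fintype.card ι) := by
    simp only [hS, Finset.insert_subset_iff, Finset.image_subset_iff, Finset.mem_piAntidiag,
      Finset.mem_offDiag, Finset.mem_univ, true_and, implies_true, and_true]
    exact ⟨by simp, fun p hp => sum_zeroTwoExponent hp⟩
  rw [← Finset.sum_subset hsub, Finset.sum_insert hone, hS,
    Finset.sum_image (zeroTwoExponent_injOn_offDiag _)]
  intro k hk hkS
  by_contra hfk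
  have hzero (i j : ι) (hi : k i = 0) (hj : k j = 0) : i = j := by
    by_contra hij
    exact hfk (hf k i j hij hi hj)
  apply hkS
  rcases eq_one_or_eq_zeroTwoExponent (Finset.mem_piAntidiag.1 hk).1 hzero with
    rfl | ⟨i, j, hij, rfl⟩
  · exact Finset.mem_insert_self 1 S
  · exact Finset.mem_insert_of_mem (Finset.mem_image.2 ⟨(i, j), by simpa using hij, rfl⟩)

end ZeroTwoExponent

section ColPow

variable {m ι R : Type*}

/-- The matrix whose `l`-th column is the entrywise `k l`-th power of the `l`-th column of `A`,
that is `(d_1^(k 1), …, d_n^(k n))` when the columns of `A` are `d_1, …, d_n`. -/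
def colPow [Monoid R] (A : Matrix m ι R) (k : ι → ℕ) : Matrix m ι R :=
  Matrix.of fun r l => A r l ^ k l

theorem colPow_one [Monoid R] (A : Matrix m ι R) : colPow A 1 = A := by
  ext r l
  exact pow_one (A r l)

theorem colPow_zeroTwoExponent [Monoid R] [DecidableEq ι] (A : Matrix m ι R) (i j : ι) :
    colPow A (zeroTwoExponent i j) =
      Matrix.of fun r l => if l = i then 1 else if l = j then A r j ^ 2 else A r l := by
  ext r l
  simp only [colPow, zeroTwoExponent, Matrix.of_apply]
  split_ifs <;> simp_all

theorem det_colPow_eq_zero [CommRing R] [Fintype ι] [DecidableEq ι] (A : Matrix ι ι R)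
    {k : ι → ℕ} {i j : ι} (hij : i ≠ j) (hi : k i = 0) (hj : k j = 0) :
    (colPow A k).det = 0 :=
  Matrix.det_zero_of_column_eq hij fun r => by simp only [colPow, Matrix.of_apply, hi, hj, pow_zero]

end ColPow

section SignedPowSum

variable {ι κ R : Type*} [Fintype ι] [DecidableEq ι] [Fintype κ] [DecidableEq κ]

/-- The sum of the signed `m`-th powers of the diagonal sums `∑ i, A (σ i) i`: the Leibniz formula
for `det A` with each product replaced by the `m`-th power of a sum. It is `m!` times the
coefficient of `t ^ m` in the determinant of the matrix with entries `exp (t * A i j)`. -/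
def signedPowSum [Ring R] (A : Matrix ι ι R) (m : ℕ) : R :=
  ∑ σ : Equiv.Perm ι, ((Equiv.Perm.sign σ : ℤ) : R) * (∑ i, A (σ i) i) ^ m

theorem signedPowSum_submatrix_equiv_self [Ring R] (e : ι ≃ κ) (A : Matrix κ κ R) (m : ℕ) :
    signedPowSum (A.submatrix e e) m = signedPowSum A m := by
  refine Fintype.sum_equiv e.permCongr _ _ fun σ => ?_
  rw [Equiv.Perm.sign_permCongr, ← Equiv.sum_comp e]
  simp only [Equiv.permCongr_apply, Equiv.symm_apply_apply, Matrix.submatrix_apply]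

theorem signedPowSum_eq_sum_multinomial_mul_det [CommRing R] (A : Matrix ι ι R) (m : ℕ) :
    signedPowSum A m = ∑ k ∈ Finset.piAntidiag Finset.univ m,
      (Nat.multinomial Finset.univ k : R) * (colPow A k).det := by
  simp only [signedPowSum, Finset.sum_pow_eq_sum_piAntidiag, Matrix.det_apply', Finset.mul_sum]
  rw [Finset.sum_comm]
  refine Finset.sum_congr rfl fun k _ => Finset.sum_congr rfl fun σ _ => ?_
  simp only [colPow, Matrix.of_apply]
  ring

theorem signedPowSum_card [CommRing R] [Invertible (2 : R)] (A : Matrix ι ι R) :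
    signedPowSum A (Fintype.card ι) = (Fintype.card ι).factorial *
      (⅟2 * ∑ i, ∑ j ∈ Finset.univ.erase i, (colPow A (zeroTwoExponent i j)).det + A.det) := by
  have hone : (Nat.multinomial Finset.univ (1 : ι → ℕ) : R) = (Fintype.card ι).factorial := by
    simp [Nat.multinomial]
  have hzeroTwo : ∀ p ∈ (Finset.univ : Finset ι).offDiag,
      (Nat.multinomial Finset.univ (zeroTwoExponent p.1 p.2) : R)
        = (Fintype.card ι).factorial * ⅟2 := by
    intro p hp
    rw [← two_mul_multinomial_zeroTwoExponent (Finset.mem_offDiag.1 hp).2.2, Nat.cast_mul,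
      Nat.cast_ofNat, mul_comm, invOf_mul_cancel_left]
  calc
    _ = (Fintype.card ι).factorial * A.det + ∑ p ∈ (Finset.univ : Finset ι).offDiag,
          (Nat.multinomial Finset.univ (zeroTwoExponent p.1 p.2) : R)
            * (colPow A (zeroTwoExponent p.1 p.2)).det := by
      rw [signedPowSum_eq_sum_multinomial_mul_det, sum_piAntidiag_univ_card, hone, colPow_one]
      intro k i j hij hi hj
      rw [det_colPow_eq_zero A hij hi hj, mul_zero]
    _ = (Fintype.card ι).factorial * A.det + (Fintype.card ι).factorial * ⅟2
          * ∑ p ∈ (Finset.univ : Finset ι).offDiag,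
              (colPow A (zeroTwoExponent p.1 p.2)).det := by
      rw [Finset.mul_sum, Finset.sum_congr rfl fun p hp => congrArg (· * _) (hzeroTwo p hp)]
    _ = _ := by
      rw [Finset.sum_finset_product' _ Finset.univ (fun i => Finset.univ.erase i)
        (f := fun i j => (colPow A (zeroTwoExponent i j)).det) (by simp [eq_comm])]
      ring

end SignedPowSum

theorem neg_one_pow_card_add_orbitCount {I : Type*} [Fintype I] (σ : Equiv.Perm I) :
    (-1 : ℤˣ) ^ (Fintype.card I + orbitCount σ) = Equiv.Perm.sign σ := by
  have hexp : Fintype.card I + orbitCount σ = σ.support.card + Multiset.card σ.cycleType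
      + 2 * (Fintype.card I - σ.support.card) := by
    have hle : σ.support.card ≤ Fintype.card I := Finset.card_le_univ _
    unfold orbitCount
    omega
  rw [hexp, pow_add, pow_mul, neg_one_sq, one_pow, mul_one, Equiv.Perm.sign_of_cycleType,
    Equiv.Perm.sum_cycleType]

theorem sum_neg_one_pow_orbitCount_mul {I R : Type*} [Fintype I] [Ring R]
    (A : Matrix I I R) (m : ℕ) :
    ∑ σ : Equiv.Perm I, (-1 : R) ^ (Fintype.card I + orbitCount σ) * (∑ i, A (σ i) i) ^ m
      = signedPowSum A m :=
  Finset.sum_congr rfl fun σ _ => by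
    simp only [← neg_one_pow_card_add_orbitCount, Units.val_pow_eq_pow_val, Units.val_neg,
      Units.val_one, Int.cast_pow, Int.cast_neg, Int.cast_one]

theorem stmt18_general {X R : Type*} [Fintype X] [CommRing R] [Invertible (2 : R)]
    (d : X → X → R) (n : ℕ) (e : Fin n ≃ X) :
    ∑ σ : Equiv.Perm X, (-1 : R) ^ (n + orbitCount σ) * (∑ x : X, d x (σ x)) ^ n =
      (Nat.factorial n : R) *
        (⅟2 *
            (∑ i : Fin n, ∑ j ∈ Finset.univ.erase i,
              (Matrix.of fun r l : Fin n =>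
                if l = i then (1 : R)
                else if l = j then d (e j) (e r) ^ 2
                else d (e l) (e r)).det) +
          (Matrix.of fun i j : Fin n => d (e i) (e j)).det) := by
  let D : Matrix X X R := Matrix.of fun r l => d l r
  have hcard : Fintype.card X = n := by simpa using (Fintype.card_congr e).symm
  calc
    _ = signedPowSum D n := hcard ▸ sum_neg_one_pow_orbitCount_mul D n
    _ = signedPowSum (D.submatrix e e) (Fintype.card (Fin n)) := by
      rw [signedPowSum_submatrix_equiv_self, Fintype.card_fin]
    _ = _ := by
      rw [signedPowSum_card, ← Matrix.det_transpose (D.submatrix e e), Fintype.card_fin]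
      simp only [colPow_zeroTwoExponent]
      rfl

theorem stmt18 {X : Type*} [MetricSpace X] [Fintype X] (n : ℕ) (e : Fin n ≃ X) :
    ∑ σ : Equiv.Perm X,
        (-1 : ℝ) ^ (n + orbitCount σ) * (∑ x : X, dist x (σ x)) ^ n =
      (Nat.factorial n : ℝ) *
        ((1 / 2 : ℝ) *
            (∑ i : Fin n, ∑ j ∈ Finset.univ.erase i,
              (Matrix.of fun r l : Fin n =>
                if l = i then (1 : ℝ)
                else if l = j then dist (e j) (e r) ^ 2
                else dist (e l) (e r)).det) +
          (Matrix.of fun i j : Fin n => dist (e i) (e j)).det) := by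
  simpa only [one_div, invOf_eq_inv] using stmt18_general (dist (α := X)) n e
end
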